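/- The following three conditions are equivalent: (a) there is a constant c such that for all n and all binary strings x of length n, K(x) − K(n) ≤ 2·(C(x) − C(n)) + c; (b) for each constant c' there is a constant d' such that for all n and all binary strings x of length n, if C(x) − C(n) ≤ c' then K(x) − K(n) ≤ d'; (c) there is a constant c'' such that K(C(n) ∣ n, K(n)) ≤ c'' for all n. -/

import Mathlib

open MeasureTheory Filter

/-- Cantor space: the space of infinite binary sequences. -/
abbrev Cantor : Type := ℕ → Bool

/-- Finite binary strings. -/
abbrev BStr : Type := List Bool

/-- The cylinder set of sequences extending the string `x`. -/
def cyl (x : BStr) : Set Cantor := {Z | ∀ i : Fin x.length, Z i.1 = x.get i}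

/-- The string of the first `n` bits of `Z`. -/
def seg (Z : Cantor) (n : ℕ) : BStr := List.ofFn fun i : Fin n => Z i.1

/-- `lam` is the uniform (fair-coin product) measure: every cylinder `[x]`
has measure `2^{-|x|}`. -/
def IsUniform (lam : Measure Cantor) : Prop :=
  ∀ x : BStr, lam (cyl x) = (2 : ENNReal)⁻¹ ^ x.length

/-- `(G_m)` is a Martin-Löf test with respect to the measure `ρ`:
the sets `G_m` are uniformly effectively open and `ρ (G_m) ≤ 2^{-m}`. -/
def IsMLTest (ρ : Measure Cantor) (G : ℕ → Set Cantor) : Prop :=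
  (∃ σ : ℕ → ℕ → BStr, Computable₂ σ ∧ ∀ m, G m = ⋃ i, cyl (σ m i)) ∧
  ∀ m, ρ (G m) ≤ (2 : ENNReal)⁻¹ ^ m

/-- `μ` is Martin-Löf absolutely continuous in `ρ`: `inf_m μ(G_m) = 0`
for every `ρ`-Martin-Löf test `(G_m)`. -/
def MLAC (μ ρ : Measure Cantor) : Prop :=
  ∀ G : ℕ → Set Cantor, IsMLTest ρ G → ⨅ m, μ (G m) = 0

/-- `Z` is Martin-Löf random with respect to `lam`. -/
def MLRandom (lam : Measure Cantor) (Z : Cantor) : Prop :=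
  ∀ G : ℕ → Set Cantor, IsMLTest lam G → Z ∉ ⋂ m, G m

/-- `ρ` is a computable measure: `ρ [x]` is a computable real, uniformly in `x`. -/
def ComputableMeasure (ρ : Measure Cantor) : Prop :=
  ∃ q : BStr → ℕ → ℚ, Computable₂ q ∧
    ∀ x k, |(q x k : ℝ) - (ρ (cyl x)).toReal| ≤ (2 : ℝ)⁻¹ ^ k

/-- `U` is a universal plain machine. -/
def UniversalPlain (U : BStr →. BStr) : Prop :=
  Partrec U ∧ ∀ M : BStr →. BStr, Partrec M →
    ∃ c : ℕ, ∀ p x, x ∈ M p → ∃ q : BStr, q.length ≤ p.length + c ∧ x ∈ U q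

/-- The domain of `M` is an antichain under the prefix relation. -/
def PrefixFreeDom (M : BStr →. BStr) : Prop :=
  ∀ p q : BStr, (M p).Dom → (M q).Dom → p <+: q → p = q

/-- `U` is a universal prefix-free machine. -/
def UniversalPrefixFree (U : BStr →. BStr) : Prop :=
  Partrec U ∧ PrefixFreeDom U ∧
  ∀ M : BStr →. BStr, Partrec M → PrefixFreeDom M →
    ∃ c : ℕ, ∀ p x, x ∈ M p → ∃ q : BStr, q.length ≤ p.length + c ∧ x ∈ U q

/-- Kolmogorov complexity of the string `x` with respect to the machine `U`:
the minimal length of a `U`-description of `x`. -/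
noncomputable def cpx (U : BStr →. BStr) (x : BStr) : ℕ :=
  sInf {n | ∃ q : BStr, q.length = n ∧ x ∈ U q}

/-- A natural number `n` identified with the string `0^n`. -/
def numStr (n : ℕ) : BStr := List.replicate n false

/-- Complexity of the natural number `n` (i.e., of the string `0^n`). -/
noncomputable def cpxN (U : BStr →. BStr) (n : ℕ) : ℕ := cpx U (numStr n)

/-- The `μ`-average complexity of the strings of length `n`:
`Σ_{|x|=n} cpx(x) · μ[x]`. -/
noncomputable def avgCpx (U : BStr →. BStr) (μ : Measure Cantor) (n : ℕ) : ℝ :=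
  ∑ v : Fin n → Bool, (cpx U (List.ofFn v) : ℝ) * (μ (cyl (List.ofFn v))).toReal

/-- A measure `μ` is trivial for the complexity given by the machine `U`
(e.g. K-trivial when `U` is the universal prefix-free machine, C-trivial
when `U` is the universal plain machine). -/
def MeasTrivial (U : BStr →. BStr) (μ : Measure Cantor) : Prop :=
  ∃ c : ℝ, ∀ n : ℕ, avgCpx U μ n ≤ (cpxN U n : ℝ) + c

/-- A universal plain machine with an auxiliary (conditioning) input;
natural-number conditions are identified with unary strings and pairs
are encoded by the computable pairing `Nat.pair`. -/
def UniversalPlainCond (U : BStr → ℕ →. BStr) : Prop :=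
  Partrec₂ U ∧ ∀ M : BStr → ℕ →. BStr, Partrec₂ M →
    ∃ c : ℕ, ∀ p y x, x ∈ M p y → ∃ q : BStr, q.length ≤ p.length + c ∧ x ∈ U q y

/-- For every condition `y`, the domain of `M (·) y` is an antichain under
the prefix relation. -/
def PrefixFreeDomCond (M : BStr → ℕ →. BStr) : Prop :=
  ∀ (y : ℕ) (p q : BStr), (M p y).Dom → (M q y).Dom → p <+: q → p = q

/-- A universal prefix-free machine with an auxiliary (conditioning) input. -/
def UniversalPrefixFreeCond (U : BStr → ℕ →. BStr) : Prop :=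
  Partrec₂ U ∧ PrefixFreeDomCond U ∧
  ∀ M : BStr → ℕ →. BStr, Partrec₂ M → PrefixFreeDomCond M →
    ∃ c : ℕ, ∀ p y x, x ∈ M p y → ∃ q : BStr, q.length ≤ p.length + c ∧ x ∈ U q y

/-- Conditional Kolmogorov complexity of `x` given `y`, with respect to the
machine `U` with auxiliary input. -/
noncomputable def cpxCond (U : BStr → ℕ →. BStr) (x : BStr) (y : ℕ) : ℕ :=
  sInf {n | ∃ q : BStr, q.length = n ∧ x ∈ U q y}

/-!
Few strings of length `n` have complexity close to that of `n`: if `2 ^ (3 * s)` strings of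
length `n` had descriptions shorter than `L`, then enumerating the lengths which are frequent in
this sense would describe `n` itself with only `L - 2 * s + O(1)` bits (directly for plain
machines, by a Kraft–Chaitin argument for prefix-free ones).

The string `0 ^ C(n) 1 0 ^ (n - C(n) - 1)` has plain complexity `C(n) + O(1)`. Under (b) it is
therefore one of boundedly many strings of length `n` with `K ≤ K(n) + O(1)`, which can be
enumerated from `n` and `K(n)`; so `C(n)` is determined by boundedly many further bits, which is
(c). Conversely, let `C(x) < C(n) + 2 * f`. A prefix-free description of `n` followed by the
conditional one of `C(n)`, by `f` in unary and by the `3 * f + O(1)` bits of the index of `x` among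
the strings of length `n` and complexity below `C(n) + 2 * f` describes `x`, and its last two parts
take `4 * f + O(1)` bits, which gives (a).
-/

namespace KolmogorovComplexity

open Encodable

attribute [local fun_prop] Primrec Primrec.id Primrec.const Primrec.comp Primrec.pair Primrec.fst
  Primrec.snd Primrec.encode Primrec.decode Primrec.unpair Primrec.list_range Primrec.option_some
  Primrec.option_isSome Primrec.list_length
  Computable Computable.comp Computable.pair Primrec.to_comp

section Primrec

variable {α β : Type} [Primcodable α] [Primcodable β]

theorem primrec_add {f g : α → ℕ} (hf : Primrec f) (hg : Primrec g) :
    Primrec fun a => f a + g a :=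
  Primrec.nat_add.comp hf hg

theorem primrec_mul {f g : α → ℕ} (hf : Primrec f) (hg : Primrec g) :
    Primrec fun a => f a * g a :=
  Primrec.nat_mul.comp hf hg

theorem primrec_pow {f g : α → ℕ} (hf : Primrec f) (hg : Primrec g) :
    Primrec fun a => f a ^ g a :=
  (Primrec₂.unpaired'.1 Nat.Primrec.pow).comp hf hg

theorem primrec_append {f g : α → List β} (hf : Primrec f) (hg : Primrec g) :
    Primrec fun a => f a ++ g a :=
  Primrec.list_append.comp hf hg

theorem primrec_cons {f : α → β} {g : α → List β} (hf : Primrec f) (hg : Primrec g) :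
    Primrec fun a => f a :: g a :=
  Primrec.list_cons.comp hf hg

theorem primrec_replicate {f : α → ℕ} (hf : Primrec f) (b : β) :
    Primrec fun a => List.replicate (f a) b :=
  (Primrec.list_map (Primrec.list_range.comp hf) (Primrec.const b).to₂).of_eq fun a => by
    simp [List.map_const']

end Primrec

attribute [local fun_prop] primrec_add primrec_mul primrec_pow primrec_append primrec_cons
  primrec_replicate

section RecursivelyEnumerable

variable {α β : Type} [Primcodable α] [Primcodable β]

theorem exists_primrec_stages {f : α →. β} (hf : Partrec f) :
    ∃ g : α → ℕ → Option β, Primrec (Function.uncurry g) ∧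
      ∀ a b, b ∈ f a ↔ ∃ s, g a s = some b := by
  obtain ⟨c, hc⟩ := Nat.Partrec.Code.exists_code.1 hf
  refine ⟨fun a s => (Nat.Partrec.Code.evaln s c (encode a)).bind decode, ?_, fun a b => ?_⟩
  · exact Primrec.option_bind (Nat.Partrec.Code.primrec_evaln.comp
      (by fun_prop : Primrec fun x : α × ℕ => ((x.2, c), encode x.1))) (Primrec.decode.comp .snd)
  · have hcode : c.eval (encode a) = (f a).map encode := by rw [hc]; simp
    have hmem : ∀ {m s}, Nat.Partrec.Code.evaln s c (encode a) = some m → ∃ b ∈ f a, encode b = m :=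
      fun h => (Part.mem_map_iff _).1 (hcode ▸ Nat.Partrec.Code.evaln_sound h)
    constructor
    · intro hb
      obtain ⟨s, hs⟩ := Nat.Partrec.Code.evaln_complete.1 (hcode ▸ Part.mem_map encode hb)
      exact ⟨s, by simp [Option.mem_def.1 hs]⟩
    · rintro ⟨s, hs⟩
      obtain ⟨m, hm, hb⟩ := Option.bind_eq_some_iff.1 hs
      obtain ⟨b', hb', rfl⟩ := hmem hm
      rwa [← Option.some.inj ((encodek b').symm.trans hb)]

theorem rePred_iff_exists_primrecRel {p : α → Prop} :
    REPred p ↔ ∃ q : α → ℕ → Prop, PrimrecRel q ∧ ∀ a, p a ↔ ∃ s, q a s := by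
  constructor
  · intro hp
    obtain ⟨g, hg, hgp⟩ := exists_primrec_stages hp
    refine ⟨fun a s => g a s = some (), Primrec.eq.comp hg (.const _), fun a => ?_⟩
    rw [← hgp a ()]
    simp
  · rintro ⟨q, hq, hpq⟩
    classical
    refine (Partrec.dom_re (Partrec.rfind (p := fun a s => Part.some (decide (q a s)))
      hq.decide.to_comp.partrec)).of_eq fun a => Nat.rfind_dom.trans ?_
    simp [hpq]

theorem rePred_eq {f g : α → β} (hf : Computable f) (hg : Computable g) :
    REPred fun a => f a = g a := by
  classical
  exact ComputablePred.to_re ⟨_, Primrec.eq.decide.to_comp.comp hf hg⟩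

theorem rePred_comp {p : β → Prop} (hp : REPred p) {f : α → β} (hf : Computable f) :
    REPred fun a => p (f a) :=
  Partrec.comp hp hf

theorem rePred_and {p q : α → Prop} (hp : REPred p) (hq : REPred q) :
    REPred fun a => p a ∧ q a := by
  obtain ⟨p', hp', hpp'⟩ := rePred_iff_exists_primrecRel.1 hp
  obtain ⟨q', hq', hqq'⟩ := rePred_iff_exists_primrecRel.1 hq
  refine rePred_iff_exists_primrecRel.2 ⟨fun a s => p' a s.unpair.1 ∧ q' a s.unpair.2, ?_, ?_⟩
  · exact (hp'.comp (by fun_prop) (by fun_prop)).and (hq'.comp (by fun_prop) (by fun_prop))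
  · intro a
    rw [hpp', hqq']
    constructor
    · rintro ⟨⟨s, hs⟩, t, ht⟩
      exact ⟨s.pair t, by simpa using ⟨hs, ht⟩⟩
    · rintro ⟨s, hs, ht⟩
      exact ⟨⟨_, hs⟩, _, ht⟩

theorem exists_primrec_enumeration {R : α → β → Prop} (hR : REPred fun x : α × β => R x.1 x.2) :
    ∃ g : α → ℕ → Option β, Primrec (Function.uncurry g) ∧
      ∀ a b, R a b ↔ ∃ s, g a s = some b := by
  classical
  obtain ⟨q, hq, hRq⟩ := rePred_iff_exists_primrecRel.1 hR
  refine ⟨fun a s => (decode (α := β) s.unpair.1).bind fun b =>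
    if q (a, b) s.unpair.2 then some b else none, ?_, fun a b => ?_⟩
  · exact Primrec.option_bind (by fun_prop)
      (Primrec.ite (hq.comp (by fun_prop) (by fun_prop)) (by fun_prop) (by fun_prop))
  · rw [hRq (a, b)]
    constructor
    · rintro ⟨s, hs⟩
      exact ⟨(encode b).pair s, by simp [hs]⟩
    · rintro ⟨s, hs⟩
      simp only [Option.bind_eq_some_iff, Option.ite_none_right_eq_some, Option.some.injEq] at hs
      obtain ⟨_, -, hs, rfl⟩ := hs
      exact ⟨_, hs⟩

theorem rePred_exists {p : α × β → Prop} (hp : REPred p) : REPred fun a => ∃ b, p (a, b) := by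
  obtain ⟨g, hg, hgp⟩ := exists_primrec_enumeration (R := fun a b => p (a, b)) hp
  refine rePred_iff_exists_primrecRel.2 ⟨fun a s => (g a s).isSome = true,
    Primrec.eq.comp (by fun_prop) (by fun_prop), fun a => ?_⟩
  simp only [hgp, Option.isSome_iff_exists]
  exact exists_comm

theorem rePred_mem {f : α →. β} (hf : Partrec f) : REPred fun x : α × β => x.2 ∈ f x.1 := by
  obtain ⟨g, hg, hgf⟩ := exists_primrec_stages hf
  exact rePred_iff_exists_primrecRel.2 ⟨fun x s => g x.1 s = some x.2,
    Primrec.eq.comp (by fun_prop) (by fun_prop), fun x => hgf x.1 x.2⟩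

theorem exists_partrec_of_graph {R : α → β → Prop} (hR : REPred fun x : α × β => R x.1 x.2)
    (huniq : ∀ {a b b'}, R a b → R a b' → b = b') :
    ∃ f : α →. β, Partrec f ∧ ∀ a b, b ∈ f a ↔ R a b := by
  obtain ⟨g, hg, hgR⟩ := exists_primrec_enumeration hR
  have sound : ∀ {a b}, b ∈ Nat.rfindOpt (g a) → R a b :=
    fun h => (hgR _ _).2 (Nat.rfindOpt_spec h)
  refine ⟨fun a => Nat.rfindOpt (g a), Partrec.rfindOpt hg.to_comp, fun a b => ⟨sound, fun h => ?_⟩⟩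
  obtain ⟨s, hs⟩ := (hgR a b).1 h
  have hmem := Part.get_mem (Nat.rfindOpt_dom.2 ⟨s, b, hs⟩)
  exact huniq (sound hmem) h ▸ hmem

end RecursivelyEnumerable

section Enumeration

/-- `E a` enumerates the set `S a` in stages: the stage lists grow by appending elements that have
not been listed before, and jointly they exhaust `S a`. -/
structure IsEnumeration {α β : Type*} (E : α → ℕ → List β) (S : α → Set β) : Prop where
  isPrefix (a : α) {s t : ℕ} : s ≤ t → E a s <+: E a t
  nodup (a : α) (s : ℕ) : (E a s).Nodup
  mem_iff (a : α) (b : β) : b ∈ S a ↔ ∃ s, b ∈ E a s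

section

variable {α β : Type*} {E : α → ℕ → List β} {S : α → Set β}

theorem IsEnumeration.getElem?_mono (hE : IsEnumeration E S) {a : α} {s t i : ℕ} {b : β}
    (hst : s ≤ t) (h : (E a s)[i]? = some b) : (E a t)[i]? = some b := by
  obtain ⟨u, hu⟩ := hE.isPrefix a hst
  rw [← hu, List.getElem?_append_left (List.getElem?_eq_some_iff.1 h).1, h]

theorem IsEnumeration.getElem?_unique (hE : IsEnumeration E S) {a : α} {s t i : ℕ} {b b' : β}
    (h : (E a s)[i]? = some b) (h' : (E a t)[i]? = some b') : b = b' :=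
  Option.some.inj ((hE.getElem?_mono (le_max_left s t) h).symm.trans
    (hE.getElem?_mono (le_max_right s t) h'))

theorem IsEnumeration.le_encard_iff (hE : IsEnumeration E S) {a : α}
    {N : ℕ} : N ≤ (S a).encard ↔ ∃ s, N ≤ (E a s).length := by
  classical
  constructor
  · intro h
    obtain ⟨t, ht, htN⟩ := Set.exists_subset_encard_eq h
    have hfin : t.Finite := Set.finite_of_encard_eq_coe htN
    have hst : ∀ b ∈ t, ∃ s, b ∈ E a s := fun b hb => (hE.mem_iff a b).1 (ht hb)
    choose! s hs using hst
    obtain ⟨m, hm⟩ := (hfin.image s).bddAbove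
    refine ⟨m, ?_⟩
    have hsub : t ⊆ (E a m).toFinset := fun b hb => by
      simpa using (hE.isPrefix a (hm ⟨b, hb, rfl⟩)).subset (hs b hb)
    have hcard := Set.encard_le_encard hsub
    rw [htN, Set.encard_coe_eq_coe_finsetCard, List.toFinset_card_of_nodup (hE.nodup a m)] at hcard
    exact_mod_cast hcard
  · rintro ⟨s, hs⟩
    have hsub : ((E a s).toFinset : Set β) ⊆ S a := fun b hb =>
      (hE.mem_iff a b).2 ⟨s, by simpa using hb⟩
    have hcard := Set.encard_le_encard hsub
    rw [Set.encard_coe_eq_coe_finsetCard, List.toFinset_card_of_nodup (hE.nodup a s)] at hcard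
    exact le_trans (by exact_mod_cast hs) hcard

end

variable {α β : Type} [Primcodable α] [Primcodable β] {S : α → Set β}

theorem exists_isEnumeration (hS : REPred fun x : α × β => x.2 ∈ S x.1) :
    ∃ E : α → ℕ → List β, Primrec (Function.uncurry E) ∧ IsEnumeration E S := by
  classical
  obtain ⟨g, hg, hgS⟩ := exists_primrec_enumeration (R := fun a b => b ∈ S a) hS
  let fresh (a : α) (s : ℕ) : Prop := ∀ t < s, g a t ≠ g a s
  let new (a : α) (s : ℕ) : Option β := if fresh a s then g a s else none
  have hfresh : PrimrecRel fresh := by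
    have h : PrimrecRel fun (t : ℕ) (x : α × ℕ) => ¬ g x.1 t = g x.1 x.2 :=
      (Primrec.eq.comp (by fun_prop) (by fun_prop)).not
    exact (h.forall_mem_list.comp (Primrec.list_range.comp .snd) .id).of_eq fun x => by
      simp [fresh]
  have hnew : Primrec (Function.uncurry new) := Primrec.ite hfresh hg (.const none)
  have new_eq : ∀ {a s b}, new a s = some b → fresh a s ∧ g a s = some b := by
    simp [new]
  refine ⟨fun a s => (List.range s).filterMap (new a),
    Primrec.listFilterMap (by fun_prop)
      (by fun_prop : Primrec fun x : (α × ℕ) × ℕ => new x.1.1 x.2),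
    fun a s t hst => ?_, fun a s => ?_, fun a b => ?_⟩
  · exact (List.prefix_iff_eq_take.2 (by simp [List.take_range, hst])).filterMap _
  · refine List.nodup_range.filterMap fun t t' b ht ht' => ?_
    obtain ⟨hfresh, hg⟩ := new_eq ht
    obtain ⟨hfresh', hg'⟩ := new_eq ht'
    exact le_antisymm (not_lt.1 fun h => hfresh t' h (hg'.trans hg.symm))
      (not_lt.1 fun h => hfresh' t h (hg.trans hg'.symm))
  · rw [hgS]
    simp only [List.mem_filterMap, List.mem_range]
    constructor
    · intro h
      have hfirst : fresh a (Nat.find h) := fun t ht =>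
        (Nat.find_spec h).symm ▸ Nat.find_min h ht
      exact ⟨Nat.find h + 1, Nat.find h, Nat.lt_succ_self _,
        (if_pos hfirst).trans (Nat.find_spec h)⟩
    · rintro ⟨s, t, -, h⟩
      exact ⟨t, (new_eq h).2⟩

theorem rePred_le_encard (hS : REPred fun x : α × β => x.2 ∈ S x.1) :
    REPred fun x : ℕ × α => (x.1 : ℕ∞) ≤ (S x.2).encard := by
  obtain ⟨E, hprim, hE⟩ := exists_isEnumeration hS
  exact rePred_iff_exists_primrecRel.2 ⟨fun x s => x.1 ≤ (E x.2 s).length,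
    Primrec.nat_le.comp (by fun_prop) (by fun_prop),
    fun x => hE.le_encard_iff⟩

end Enumeration

section Counting

open scoped ENNReal

theorem encard_length_eq (l : ℕ) : {p : BStr | p.length = l}.encard = 2 ^ l := by
  change ENat.card (List.Vector Bool l) = 2 ^ l
  simp

theorem encard_length_lt_le (l : ℕ) : {p : BStr | p.length < l}.encard ≤ 2 ^ l := by
  induction l with
  | zero => simp
  | succ l ih =>
    have hsplit : {p : BStr | p.length < l + 1} = {p | p.length < l} ∪ {p | p.length = l} := by
      ext p
      exact Nat.lt_succ_iff_lt_or_eq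
    calc {p : BStr | p.length < l + 1}.encard
        ≤ {p : BStr | p.length < l}.encard + {p : BStr | p.length = l}.encard :=
          hsplit ▸ Set.encard_union_le _ _
      _ ≤ 2 ^ l + 2 ^ l := add_le_add ih (encard_length_eq l).le
      _ = 2 ^ (l + 1) := by ring

theorem encard_setOf_exists_mem_le {α β : Type*} (f : α →. β) (s : Set α) :
    {b | ∃ a ∈ s, b ∈ f a}.encard ≤ s.encard := by
  have hchoose : ∀ b ∈ {b | ∃ a ∈ s, b ∈ f a}, ∃ a ∈ s, b ∈ f a := fun _ => id
  choose g hgs hgf using hchoose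
  refine Function.Embedding.encard_le ⟨fun b => ⟨g b b.2, hgs b b.2⟩, fun b b' h => ?_⟩
  have hg : g b b.2 = g b' b'.2 := congrArg Subtype.val h
  exact Subtype.ext (Part.mem_unique (hgf b b.2) (hg ▸ hgf b' b'.2))

theorem tsum_natCast_mul_le_tsum_biUnion {ι β : Type*} {T : Set ι} {S : ι → Set β} {N : ℕ}
    (hS : T.PairwiseDisjoint S) (hN : ∀ i ∈ T, N ≤ (S i).encard) {w : ι → ℝ≥0∞} {v : β → ℝ≥0∞}
    (hwv : ∀ i ∈ T, ∀ b ∈ S i, w i ≤ v b) :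
    ∑' i : T, N * w i ≤ ∑' b : ⋃ i ∈ T, S i, v b := by
  rw [ENNReal.tsum_biUnion' hS]
  refine ENNReal.tsum_le_tsum fun ⟨i, hi⟩ => ?_
  calc N * w i ≤ (S i).encard * w i := by
        gcongr
        exact_mod_cast hN i hi
    _ = ∑' _ : S i, w i := (ENNReal.tsum_set_const _ _).symm
    _ ≤ ∑' b : S i, v b := ENNReal.tsum_le_tsum fun b => hwv i hi b b.2

theorem natCast_mul_encard_le_encard_biUnion {ι β : Type*} {T : Set ι} {S : ι → Set β} {N : ℕ}
    (hS : T.PairwiseDisjoint S) (hN : ∀ i ∈ T, N ≤ (S i).encard) :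
    N * T.encard ≤ (⋃ i ∈ T, S i).encard := by
  have h := tsum_natCast_mul_le_tsum_biUnion hS hN (w := 1) (v := 1) fun _ _ _ _ => le_rfl
  simp only [Pi.one_apply, mul_one, ENNReal.tsum_set_const] at h
  rw [mul_comm]
  exact_mod_cast h

theorem uniquelyDecodable_of_isAntichain {α : Type*} {C : Set (List α)}
    (hC : IsAntichain (· <+: ·) C) (hnil : [] ∉ C) :
    InformationTheory.UniquelyDecodable C := by
  have ne_nil : ∀ {w}, w ∈ C → w ≠ [] := fun hw h => hnil (h ▸ hw)
  intro L
  induction L with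
  | nil =>
    rintro (_ | ⟨w, L'⟩) - hL' h
    · rfl
    · simp [(ne_nil (hL' w (by simp)))] at h
  | cons v L ih =>
    rintro (_ | ⟨w, L'⟩) hL hL' h
    · simp [(ne_nil (hL v (by simp)))] at h
    · rw [List.flatten_cons, List.flatten_cons] at h
      have hvw : v = w := by
        rcases List.prefix_or_prefix_of_prefix (h ▸ List.prefix_append v L.flatten)
          (List.prefix_append w L'.flatten) with hp | hp
        · exact hC.eq (hL v (by simp)) (hL' w (by simp)) hp
        · exact (hC.eq (hL' w (by simp)) (hL v (by simp)) hp).symm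
      subst hvw
      rw [ih L' (fun u hu => hL u (by simp [hu])) (fun u hu => hL' u (by simp [hu]))
        (List.append_cancel_left h)]

theorem tsum_two_inv_pow_length_le_one {C : Set BStr} (hC : IsAntichain (· <+: ·) C) :
    ∑' p : C, (2⁻¹ : ℝ≥0∞) ^ p.1.length ≤ 1 := by
  by_cases hnil : [] ∈ C
  · have hsingle : C = {[]} := Set.eq_singleton_iff_unique_mem.2
      ⟨hnil, fun p hp => (hC.eq hnil hp List.nil_prefix).symm⟩
    subst hsingle
    simp
  · rw [ENNReal.tsum_eq_iSup_sum]
    refine iSup_le fun F => ?_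
    classical
    have hF : ((F.map (Function.Embedding.subtype _) : Finset BStr) : Set BStr) ⊆ C := by
      simp
    have h := InformationTheory.kraft_mcmillan_inequality
      (uniquelyDecodable_of_isAntichain (hC.subset hF) fun h => hnil (hF h))
    rw [Finset.sum_map] at h
    calc ∑ p ∈ F, (2⁻¹ : ℝ≥0∞) ^ p.1.length
        = ENNReal.ofReal (∑ p ∈ F, (1 / Fintype.card Bool : ℝ) ^ p.1.length) := by
          rw [ENNReal.ofReal_sum_of_nonneg fun _ _ => by positivity]
          simp [ENNReal.ofReal_inv_of_pos, ENNReal.ofReal_pow, ENNReal.inv_pow]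
      _ ≤ 1 := ENNReal.ofReal_le_one.2 h

end Counting

section Codes

/-- The number with binary expansion `w`, most significant bit first. -/
def binVal (w : BStr) : ℕ := w.foldl (fun n b => 2 * n + b.toNat) 0

theorem binVal_append (v w : BStr) : binVal (v ++ w) = binVal v * 2 ^ w.length + binVal w := by
  induction w using List.reverseRecOn with
  | nil => simp [binVal]
  | append_singleton w b ih =>
    have snoc : ∀ u : BStr, binVal (u ++ [b]) = 2 * binVal u + b.toNat := by simp [binVal]
    rw [← List.append_assoc, snoc, snoc, ih, List.length_append, List.length_singleton]
    ring

theorem binVal_lt (w : BStr) : binVal w < 2 ^ w.length := by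
  induction w using List.reverseRecOn with
  | nil => simp [binVal]
  | append_singleton w b ih =>
    have := b.toNat_lt
    simp only [binVal_append, List.length_append, List.length_singleton, pow_succ]
    simp only [binVal, List.foldl_cons, List.foldl_nil] at ih ⊢
    lia

theorem exists_length_eq_binVal_eq {l i : ℕ} (hi : i < 2 ^ l) :
    ∃ w : BStr, w.length = l ∧ binVal w = i := by
  induction l generalizing i with
  | zero => exact ⟨[], rfl, by simp [binVal]; lia⟩
  | succ l ih =>
    obtain ⟨w, hw, hwi⟩ := ih (i := i / 2) (by lia)
    refine ⟨w ++ [i.bodd], by simp [hw], ?_⟩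
    have := Nat.mod_two_of_bodd i
    simp only [binVal_append, hwi, List.length_singleton]
    simp only [binVal, List.foldl_cons, List.foldl_nil]
    lia

theorem primrec_binVal : Primrec binVal :=
  have : Primrec Bool.toNat := .dom_finite _
  Primrec.list_foldl .id (.const 0)
    (.to₂ (by fun_prop : Primrec fun x : BStr × ℕ × Bool => 2 * x.2.1 + x.2.2.toNat))

/-- The word `1ⁿ0`. -/
def unaryCode (n : ℕ) : BStr := List.replicate n true ++ [false]

@[simp] theorem length_unaryCode (n : ℕ) : (unaryCode n).length = n + 1 := by simp [unaryCode]

theorem eq_of_unaryCode_append_eq {m n : ℕ} {v w : BStr}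
    (h : unaryCode m ++ v = unaryCode n ++ w) : m = n := by
  induction m generalizing n with
  | zero => cases n <;> simp_all [unaryCode, List.replicate_succ]
  | succ m ih =>
    cases n with
    | zero => simp [unaryCode, List.replicate_succ] at h
    | succ n =>
      rw [ih (n := n)]
      simpa [unaryCode, List.replicate_succ] using h

theorem primrec_unaryCode : Primrec unaryCode := by
  unfold unaryCode
  fun_prop

@[simp] theorem length_numStr (n : ℕ) : (numStr n).length = n := List.length_replicate

theorem primrec_numStr : Primrec numStr := primrec_replicate .id false

end Codes

attribute [local fun_prop] primrec_binVal primrec_unaryCode primrec_numStr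

section Machines

variable {α β γ : Type} [Primcodable α] [Primcodable β] [Primcodable γ]

/-- A prefix-free machine with auxiliary input, given by its graph: `R a p x` means that the program
`p` produces `x` on the auxiliary input `a`. Machines without auxiliary input have `α = Unit`. -/
structure IsPrefixMachine (R : α → BStr → β → Prop) : Prop where
  rePred : REPred fun x : α × BStr × β => R x.1 x.2.1 x.2.2
  eq_of_isPrefix {a : α} {p q : BStr} {x y : β} : R a p x → R a q y → p <+: q → p = q ∧ x = y

theorem IsPrefixMachine.comp {R : α → BStr → β → Prop} (hR : IsPrefixMachine R) {f : γ → α}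
    (hf : Computable f) : IsPrefixMachine fun c => R (f c) where
  rePred := rePred_comp hR.rePred (by fun_prop : Computable fun x : γ × BStr × β => (f x.1, x.2))
  eq_of_isPrefix := hR.eq_of_isPrefix

theorem isPrefixMachine_unaryCode :
    IsPrefixMachine fun (_ : α) p (x : β) => p = unaryCode (encode x) where
  rePred := rePred_eq (by fun_prop) (by fun_prop)
  eq_of_isPrefix := by
    rintro _ _ _ x y rfl rfl ⟨w, hw⟩
    have hxy := encode_injective (eq_of_unaryCode_append_eq (hw.trans (List.append_nil _).symm))
    exact ⟨by rw [hxy], hxy⟩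

/-- The machine running `A` on the first part of its program, and then `B` on the rest of the
program with the output of `A` as an additional auxiliary input. -/
def andThen (A : α → BStr → β → Prop) (B : α × β → BStr → γ → Prop) :
    α → BStr → γ → Prop :=
  fun a r z => ∃ p q y, r = p ++ q ∧ A a p y ∧ B (a, y) q z

theorem IsPrefixMachine.andThen {A : α → BStr → β → Prop} {B : α × β → BStr → γ → Prop}
    (hA : IsPrefixMachine A) (hB : IsPrefixMachine B) : IsPrefixMachine (andThen A B) where
  rePred := by
    have hgraph : REPred fun x : (α × BStr × γ) × BStr × BStr × β =>
        x.1.2.1 = x.2.1 ++ x.2.2.1 ∧ A x.1.1 x.2.1 x.2.2.2 ∧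
          B (x.1.1, x.2.2.2) x.2.2.1 x.1.2.2 :=
      rePred_and (rePred_eq (by fun_prop) (by fun_prop)) (rePred_and
        (rePred_comp hA.rePred (f := fun x : (α × BStr × γ) × BStr × BStr × β =>
          (x.1.1, x.2.1, x.2.2.2)) (by fun_prop))
        (rePred_comp hB.rePred (f := fun x : (α × BStr × γ) × BStr × BStr × β =>
          ((x.1.1, x.2.2.2), x.2.2.1, x.1.2.2))
          (by fun_prop)))
    exact (rePred_exists hgraph).of_eq fun x => by simp [KolmogorovComplexity.andThen]
  eq_of_isPrefix := by
    rintro a _ _ z z' ⟨p, q, y, rfl, hp, hq⟩ ⟨p', q', y', rfl, hp', hq'⟩ h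
    have hpp' : p = p' ∧ y = y' := by
      rcases List.prefix_or_prefix_of_prefix ((List.prefix_append p q).trans h)
        (List.prefix_append p' q') with hp | hp
      · exact hA.eq_of_isPrefix ‹_› ‹_› hp
      · exact (hA.eq_of_isPrefix ‹_› ‹_› hp).imp Eq.symm Eq.symm
    obtain ⟨rfl, rfl⟩ := hpp'
    obtain ⟨rfl, rfl⟩ := hB.eq_of_isPrefix hq hq' ((List.prefix_append_right_inj p).1 h)
    exact ⟨rfl, rfl⟩

theorem exists_isPrefixMachine_index {S : α → Set β}
    (hS : REPred fun x : α × β => x.2 ∈ S x.1) :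
    ∃ R : ℕ × α → BStr → β → Prop, IsPrefixMachine R ∧
      (∀ {a p x}, R a p x → p.length = a.1) ∧
      ∀ l a, (S a).encard ≤ 2 ^ l → ∀ x ∈ S a, ∃ p, R (l, a) p x := by
  obtain ⟨E, hprim, hE⟩ := exists_isEnumeration hS
  refine ⟨fun a p x => p.length = a.1 ∧ ∃ s, (E a.2 s)[binVal p]? = some x, ⟨?_, ?_⟩, And.left, ?_⟩
  · have hgraph : REPred fun x : ((ℕ × α) × BStr × β) × ℕ =>
        (E x.1.1.2 x.2)[binVal x.1.2.1]? = some x.1.2.2 :=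
      rePred_eq (Primrec.list_getElem?.to_comp.comp (by fun_prop) (by fun_prop)) (by fun_prop)
    exact rePred_and (rePred_eq (by fun_prop) (by fun_prop)) (rePred_exists hgraph)
  · rintro a p q x y ⟨hp, s, hx⟩ ⟨hq, t, hy⟩ hpq
    obtain rfl := hpq.eq_of_length (hp.trans hq.symm)
    exact ⟨rfl, hE.getElem?_unique hx hy⟩
  · intro l a hl x hx
    obtain ⟨s, hs⟩ := (hE.mem_iff a x).1 hx
    obtain ⟨i, hi, rfl⟩ := List.getElem_of_mem hs
    have hi' : i < 2 ^ l := by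
      have := (hE.le_encard_iff.2 ⟨s, le_rfl⟩).trans hl
      exact hi.trans_le (by exact_mod_cast this)
    obtain ⟨p, hp, rfl⟩ := exists_length_eq_binVal_eq hi'
    exact ⟨p, hp, s, List.getElem?_eq_getElem hi⟩

end Machines

section KraftChaitin

open scoped ENNReal

/-- The sum of the dyadic weights `2⁻ˡ` with `l` in `L`, as a numerator together with the exponent
of the denominator. -/
def dyadicSum (L : List ℕ) : ℕ × ℕ := L.foldl (fun c l => (c.1 * 2 ^ l + 2 ^ c.2, c.2 + l)) (0, 0)

theorem dyadicSum_div (L : List ℕ) :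
    ((dyadicSum L).1 : ℝ) / 2 ^ (dyadicSum L).2 = (L.map (2⁻¹ ^ ·)).sum := by
  induction L using List.reverseRecOn with
  | nil => simp [dyadicSum]
  | append_singleton L l ih =>
    have snoc : dyadicSum (L ++ [l]) =
        ((dyadicSum L).1 * 2 ^ l + 2 ^ (dyadicSum L).2, (dyadicSum L).2 + l) := by simp [dyadicSum]
    rw [List.map_append, List.sum_append, ← ih, snoc]
    simp only [List.map_cons, List.map_nil, List.sum_singleton, inv_pow]
    push_cast
    field_simp
    ring

/-- The left endpoint of the dyadic interval of all reals in `[0, 1)` whose binary expansion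
extends `p`. -/
noncomputable def leftEnd (p : BStr) : ℝ := binVal p * 2⁻¹ ^ p.length

theorem leftEnd_append (p w : BStr) :
    leftEnd (p ++ w) = leftEnd p + 2⁻¹ ^ p.length * leftEnd w := by
  simp only [leftEnd, binVal_append, List.length_append, inv_pow, pow_add]
  push_cast
  field_simp

theorem leftEnd_nonneg (w : BStr) : 0 ≤ leftEnd w := by
  unfold leftEnd
  positivity

theorem leftEnd_add_le_one (w : BStr) : leftEnd w + 2⁻¹ ^ w.length ≤ 1 := by
  have h : (binVal w : ℝ) + 1 ≤ 2 ^ w.length := by exact_mod_cast binVal_lt w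
  rw [leftEnd, inv_pow, ← add_one_mul, ← div_eq_mul_inv]
  exact div_le_one_of_le₀ h (by positivity)

theorem leftEnd_le_of_isPrefix {p q : BStr} (h : p <+: q) : leftEnd p ≤ leftEnd q := by
  obtain ⟨w, rfl⟩ := h
  rw [leftEnd_append]
  have := leftEnd_nonneg w
  exact le_add_of_nonneg_right (by positivity)

theorem leftEnd_add_le_of_isPrefix {p q : BStr} (h : p <+: q) :
    leftEnd q + 2⁻¹ ^ q.length ≤ leftEnd p + 2⁻¹ ^ p.length := by
  obtain ⟨w, rfl⟩ := h
  rw [leftEnd_append, List.length_append, pow_add, add_assoc, ← mul_add]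
  gcongr
  exact mul_le_of_le_one_right (by positivity) (leftEnd_add_le_one w)

theorem isPrefix_trichotomy_of_append_singleton {α : Type*} {L M T : List α} {a b : α}
    (hL : L ++ [a] <+: T) (hM : M ++ [b] <+: T) :
    L ++ [a] <+: M ∨ M ++ [b] <+: L ∨ L ++ [a] = M ++ [b] := by
  rcases List.prefix_or_prefix_of_prefix hL hM with h | h
  · rcases List.prefix_concat_iff.1 h with h | h
    · exact .inr (.inr h)
    · exact .inl h
  · rcases List.prefix_concat_iff.1 h with h | h
    · exact .inr (.inr h.symm)
    · exact .inr (.inl h)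

variable {α β : Type}

/-- The total weight `∑ 2⁻ˡ` of a list of requests `(b, l)`, each asking for a program of length
about `l` for `b`. -/
noncomputable def weight (L : List (β × ℕ)) : ℝ := (L.map fun r => 2⁻¹ ^ r.2).sum

theorem weight_nonneg (L : List (β × ℕ)) : 0 ≤ weight L :=
  List.sum_nonneg (List.forall_mem_map.2 fun _ _ => by positivity)

theorem weight_append_singleton (L : List (β × ℕ)) (r : β × ℕ) :
    weight (L ++ [r]) = weight L + 2⁻¹ ^ r.2 := by
  simp [weight]

theorem weight_le_of_isPrefix {L M : List (β × ℕ)} (h : L <+: M) : weight L ≤ weight M := by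
  obtain ⟨N, rfl⟩ := h
  simpa [weight] using weight_nonneg N

theorem weight_le_one {S : Set (β × ℕ)} (hS : ∑' r : S, (2⁻¹ : ℝ≥0∞) ^ r.1.2 ≤ 1)
    {L : List (β × ℕ)} (hL : L.Nodup) (hLS : ∀ r ∈ L, r ∈ S) : weight L ≤ 1 := by
  classical
  have h : ENNReal.ofReal (weight L) ≤ 1 := calc
    ENNReal.ofReal (weight L) = ∑ r ∈ L.toFinset, (2⁻¹ : ℝ≥0∞) ^ r.2 := by
        rw [weight, ← List.sum_toFinset _ hL, ENNReal.ofReal_sum_of_nonneg fun _ _ => by positivity]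
        simp [ENNReal.ofReal_inv_of_pos, ENNReal.inv_pow]
    _ = ∑' r : (L.toFinset : Set (β × ℕ)), (2⁻¹ : ℝ≥0∞) ^ r.1.2 :=
        (Finset.tsum_subtype' L.toFinset fun r : β × ℕ => (2⁻¹ : ℝ≥0∞) ^ r.2).symm
    _ ≤ ∑' r : S, (2⁻¹ : ℝ≥0∞) ^ r.1.2 :=
        ENNReal.tsum_mono_subtype (fun r : β × ℕ => (2⁻¹ : ℝ≥0∞) ^ r.2) fun r hr =>
          hLS r (by simpa using hr)
    _ ≤ 1 := hS
  exact ENNReal.ofReal_le_one.1 h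

theorem primrec_floor_weight_mul_two_pow [Primcodable β] :
    Primrec fun x : List (β × ℕ) × ℕ => ⌊weight x.1 * 2 ^ x.2⌋₊ := by
  have hsum : Primrec dyadicSum := Primrec.list_foldl .id (.const (0, 0)) (.to₂ (by fun_prop :
    Primrec fun x : List ℕ × (ℕ × ℕ) × ℕ => (x.2.1.1 * 2 ^ x.2.2 + 2 ^ x.2.1.2, x.2.1.2 + x.2.2)))
  have hmap : Primrec fun L : List (β × ℕ) => L.map Prod.snd :=
    Primrec.list_map .id (Primrec.snd.comp .snd).to₂
  have hnum : Primrec fun x : List (β × ℕ) × ℕ => (dyadicSum (x.1.map Prod.snd)).1 * 2 ^ x.2 := by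
    fun_prop
  have hden : Primrec fun x : List (β × ℕ) × ℕ => 2 ^ (dyadicSum (x.1.map Prod.snd)).2 := by
    fun_prop
  refine (Primrec.nat_div.comp hnum hden).of_eq fun x => ?_
  have hweight : weight x.1 = ((x.1.map Prod.snd).map (2⁻¹ ^ ·)).sum := by
    simp [weight, Function.comp_def]
  rw [hweight, ← dyadicSum_div, div_mul_eq_mul_div, ← Nat.floor_div_eq_div (K := ℝ)]
  push_cast
  rfl

/-- The `p` of length `l + 1` whose dyadic interval is contained in
`[weight L, weight L + 2⁻ˡ)`. -/
def IsCodeword (L : List (β × ℕ)) (l : ℕ) (p : BStr) : Prop :=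
  p.length = l + 1 ∧ binVal p = ⌊weight L * 2 ^ (l + 1)⌋₊ + 1

theorem IsCodeword.weight_le {L : List (β × ℕ)} {l : ℕ} {p : BStr} (h : IsCodeword L l p) :
    weight L ≤ leftEnd p := by
  rw [leftEnd, h.1, h.2]
  have := Nat.lt_floor_add_one (weight L * 2 ^ (l + 1))
  rw [inv_pow, ← div_eq_mul_inv, le_div_iff₀ (by positivity)]
  push_cast
  exact this.le

theorem IsCodeword.leftEnd_add_le {L : List (β × ℕ)} {l : ℕ} {p : BStr} (h : IsCodeword L l p) :
    leftEnd p + 2⁻¹ ^ p.length ≤ weight L + 2⁻¹ ^ l := by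
  rw [leftEnd, h.1, h.2]
  have hfloor := Nat.floor_le (mul_nonneg (weight_nonneg L) (by positivity : (0 : ℝ) ≤ 2 ^ (l + 1)))
  rw [← add_one_mul, inv_pow, ← div_eq_mul_inv, div_le_iff₀ (by positivity), add_mul, inv_pow,
    pow_succ 2 l, inv_mul_cancel_left₀ (by positivity)]
  push_cast
  rw [← pow_succ]
  linarith

theorem exists_isCodeword {L : List (β × ℕ)} {l : ℕ} (h : weight L + 2⁻¹ ^ l ≤ 1) :
    ∃ p, IsCodeword L l p := by
  have hlt : ⌊weight L * 2 ^ (l + 1)⌋₊ + 1 < 2 ^ (l + 1) := by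
    rw [Nat.lt_iff_add_one_le]
    have hfloor := Nat.floor_le (mul_nonneg (weight_nonneg L)
      (by positivity : (0 : ℝ) ≤ 2 ^ (l + 1)))
    have hscaled : weight L * 2 ^ (l + 1) + 2 ≤ 2 ^ (l + 1) := calc
      weight L * 2 ^ (l + 1) + 2 = (weight L + 2⁻¹ ^ l) * 2 ^ (l + 1) := by
        rw [add_mul, inv_pow, pow_succ, inv_mul_cancel_left₀ (by positivity)]
      _ ≤ 2 ^ (l + 1) := mul_le_of_le_one_left (by positivity) h
    have : (⌊weight L * 2 ^ (l + 1)⌋₊ + 1 + 1 : ℝ) ≤ 2 ^ (l + 1) := by linarith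
    exact_mod_cast this
  exact exists_length_eq_binVal_eq hlt

theorem IsCodeword.not_isPrefix {L M : List (β × ℕ)} {b : β} {l m : ℕ} {p q : BStr}
    (hp : IsCodeword L l p) (hq : IsCodeword M m q) (hLM : L ++ [(b, l)] <+: M) :
    ¬ p <+: q ∧ ¬ q <+: p := by
  have hdisj : leftEnd p + 2⁻¹ ^ p.length ≤ leftEnd q := calc
    leftEnd p + 2⁻¹ ^ p.length ≤ weight L + 2⁻¹ ^ l := hp.leftEnd_add_le
    _ = weight (L ++ [(b, l)]) := (weight_append_singleton L (b, l)).symm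
    _ ≤ weight M := weight_le_of_isPrefix hLM
    _ ≤ leftEnd q := hq.weight_le
  have hpos (u : BStr) : (0 : ℝ) < 2⁻¹ ^ u.length := by positivity
  constructor <;> intro h
  · linarith [leftEnd_add_le_of_isPrefix h, hpos q]
  · linarith [leftEnd_le_of_isPrefix h, hpos p]

variable [Primcodable α] [Primcodable β]

theorem exists_isPrefixMachine_of_tsum_le_one {S : α → Set (β × ℕ)}
    (hS : REPred fun x : α × β × ℕ => x.2 ∈ S x.1)
    (hsum : ∀ a, ∑' r : S a, (2⁻¹ : ℝ≥0∞) ^ r.1.2 ≤ 1) :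
    ∃ R : α → BStr → β → Prop, IsPrefixMachine R ∧
      ∀ a b l, (b, l) ∈ S a → ∃ p, p.length = l + 1 ∧ R a p b := by
  obtain ⟨E, hprim, hE⟩ := exists_isEnumeration hS
  refine ⟨fun a p b => ∃ s L l M, E a s = L ++ [(b, l)] ++ M ∧ IsCodeword L l p, ⟨?_, ?_⟩, ?_⟩
  · have hgraph : REPred fun x : (((((α × BStr × β) × ℕ) × List (β × ℕ)) × ℕ) × List (β × ℕ)) =>
        E x.1.1.1.1.1 x.1.1.1.2 = x.1.1.2 ++ [(x.1.1.1.1.2.2, x.1.2)] ++ x.2 ∧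
          IsCodeword x.1.1.2 x.1.2 x.1.1.1.1.2.1 :=
      rePred_and (rePred_eq (by fun_prop) (by fun_prop)) (rePred_and (rePred_eq (by fun_prop)
        (by fun_prop)) (rePred_eq (by fun_prop) (primrec_add
          (primrec_floor_weight_mul_two_pow.comp (.pair (by fun_prop) (by fun_prop)))
          (.const 1)).to_comp))
    exact rePred_exists (rePred_exists (rePred_exists (rePred_exists hgraph)))
  · rintro a p q x y ⟨s, L, l, L', hL, hp⟩ ⟨t, M, m, M', hM, hq⟩ hpq
    have hLT : L ++ [(x, l)] <+: E a (max s t) :=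
      List.IsPrefix.trans ⟨L', hL.symm⟩ (hE.isPrefix a (le_max_left s t))
    have hMT : M ++ [(y, m)] <+: E a (max s t) :=
      List.IsPrefix.trans ⟨M', hM.symm⟩ (hE.isPrefix a (le_max_right s t))
    rcases isPrefix_trichotomy_of_append_singleton hLT hMT with h | h | h
    · exact absurd hpq (hp.not_isPrefix hq h).1
    · exact absurd hpq (hq.not_isPrefix hp h).2
    · obtain ⟨rfl, hr⟩ := List.append_inj' h rfl
      obtain ⟨rfl, rfl⟩ := Prod.mk.inj (List.singleton_inj.1 hr)
      exact ⟨hpq.eq_of_length (hp.1.trans hq.1.symm), rfl⟩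
  · intro a b l hbl
    obtain ⟨s, hs⟩ := (hE.mem_iff a _).1 hbl
    obtain ⟨L, M, hLM⟩ := List.append_of_mem hs
    have hLM' : E a s = L ++ [(b, l)] ++ M := by simpa using hLM
    have hweight : weight L + 2⁻¹ ^ l ≤ 1 := calc
      weight L + 2⁻¹ ^ l = weight (L ++ [(b, l)]) := (weight_append_singleton L (b, l)).symm
      _ ≤ weight (E a s) := weight_le_of_isPrefix ⟨M, hLM'.symm⟩
      _ ≤ 1 := weight_le_one (hsum a) (hE.nodup a s) fun r hr => (hE.mem_iff a r).2 ⟨s, hr⟩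
    obtain ⟨p, hp⟩ := exists_isCodeword hweight
    exact ⟨p, hp.1, s, L, l, M, hLM', hp⟩

end KraftChaitin

section Universality

theorem cpx_le_length {V : BStr →. BStr} {p x : BStr} (h : x ∈ V p) : cpx V x ≤ p.length :=
  Nat.sInf_le ⟨p, rfl, h⟩

theorem exists_length_eq_cpx {V : BStr →. BStr} {x : BStr} (h : ∃ p, x ∈ V p) :
    ∃ p, p.length = cpx V x ∧ x ∈ V p :=
  Nat.sInf_mem (s := {n | ∃ p : BStr, p.length = n ∧ x ∈ V p})
    (h.imp' List.length fun p hp => ⟨p, rfl, hp⟩)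

theorem _root_.UniversalPlain.exists_simulation {U : BStr →. BStr} (hU : UniversalPlain U)
    {R : BStr → BStr → Prop} (hR : REPred fun x : BStr × BStr => R x.1 x.2)
    (huniq : ∀ {p x y}, R p x → R p y → x = y) :
    ∃ c, ∀ p x, R p x → ∃ q : BStr, q.length ≤ p.length + c ∧ x ∈ U q := by
  obtain ⟨M, hM, hMR⟩ := exists_partrec_of_graph hR huniq
  simpa only [hMR] using hU.2 M hM

theorem _root_.UniversalPrefixFree.exists_simulation {U : BStr →. BStr} (hU : UniversalPrefixFree U)
    {R : Unit → BStr → BStr → Prop} (hR : IsPrefixMachine R) :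
    ∃ c, ∀ p x, R () p x → ∃ q : BStr, q.length ≤ p.length + c ∧ x ∈ U q := by
  have hgraph : REPred fun x : BStr × BStr => R () x.1 x.2 :=
    rePred_comp hR.rePred (by fun_prop : Computable fun x : BStr × BStr => ((), x))
  obtain ⟨M, hM, hMR⟩ := exists_partrec_of_graph hgraph fun h h' =>
    (hR.eq_of_isPrefix h h' List.prefix_rfl).2
  have hdom : PrefixFreeDom M := fun p q hp hq hpq => (hR.eq_of_isPrefix
    ((hMR _ _).1 (Part.get_mem hp)) ((hMR _ _).1 (Part.get_mem hq)) hpq).1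
  simpa only [hMR] using hU.2.2 M hM hdom

theorem _root_.UniversalPrefixFreeCond.exists_simulation {U : BStr → ℕ →. BStr}
    (hU : UniversalPrefixFreeCond U) {R : ℕ → BStr → BStr → Prop} (hR : IsPrefixMachine R) :
    ∃ c, ∀ p y x, R y p x → ∃ q : BStr, q.length ≤ p.length + c ∧ x ∈ U q y := by
  have hgraph : REPred fun x : (BStr × ℕ) × BStr => R x.1.2 x.1.1 x.2 :=
    rePred_comp hR.rePred
      (by fun_prop : Computable fun x : (BStr × ℕ) × BStr => (x.1.2, x.1.1, x.2))
  obtain ⟨M, hM, hMR⟩ := exists_partrec_of_graph (R := fun (a : BStr × ℕ) x => R a.2 a.1 x)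
    hgraph fun h h' => (hR.eq_of_isPrefix h h' List.prefix_rfl).2
  have hdom : PrefixFreeDomCond fun p y => M (p, y) := fun y p q hp hq hpq => (hR.eq_of_isPrefix
    ((hMR (p, y) _).1 (Part.get_mem hp)) ((hMR (q, y) _).1 (Part.get_mem hq)) hpq).1
  simpa only [hMR] using hU.2.2 (fun p y => M (p, y)) hM hdom

theorem _root_.UniversalPlain.exists_mem {U : BStr →. BStr} (hU : UniversalPlain U) (x : BStr) :
    ∃ p, x ∈ U p := by
  obtain ⟨c, hc⟩ := hU.exists_simulation (R := Eq) (rePred_eq (by fun_prop) (by fun_prop))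
    fun h h' => h.symm.trans h'
  exact (hc x x rfl).imp fun _ => And.right

theorem _root_.UniversalPrefixFree.exists_mem {U : BStr →. BStr}
    (hU : UniversalPrefixFree U) (x : BStr) : ∃ p, x ∈ U p := by
  obtain ⟨c, hc⟩ := hU.exists_simulation isPrefixMachine_unaryCode
  exact (hc _ x rfl).imp fun _ => And.right

theorem _root_.UniversalPrefixFreeCond.exists_mem {U : BStr → ℕ →. BStr}
    (hU : UniversalPrefixFreeCond U) (x : BStr) (y : ℕ) : ∃ p, x ∈ U p y := by
  obtain ⟨c, hc⟩ := hU.exists_simulation isPrefixMachine_unaryCode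
  exact (hc _ y x rfl).imp fun _ => And.right

theorem _root_.UniversalPrefixFree.isAntichain_dom {U : BStr →. BStr} (hU : UniversalPrefixFree U) :
    IsAntichain (· <+: ·) {p | (U p).Dom} :=
  fun p hp q hq hne h => hne (hU.2.1 p q hp hq h)

end Universality

section Descriptions

variable {V : BStr →. BStr} {m n : ℕ}

/-- The programs of `V` describing a string of length `n`. -/
def descriptions (V : BStr →. BStr) (n : ℕ) : Set BStr := {p | ∃ x ∈ V p, x.length = n}

theorem eq_of_mem_descriptions {p : BStr} (hm : p ∈ descriptions V m)
    (hn : p ∈ descriptions V n) : m = n := by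
  obtain ⟨x, hx, rfl⟩ := hm
  obtain ⟨y, hy, rfl⟩ := hn
  rw [Part.mem_unique hx hy]

theorem rePred_mem_descriptions (hV : Partrec V) :
    REPred fun x : ℕ × BStr => x.2 ∈ descriptions V x.1 := by
  have hgraph : REPred fun x : (ℕ × BStr) × BStr => x.2 ∈ V x.1.2 ∧ x.2.length = x.1.1 :=
    rePred_and (rePred_comp (rePred_mem hV)
      (by fun_prop : Computable fun x : (ℕ × BStr) × BStr => (x.1.2, x.2)))
      (rePred_eq (by fun_prop) (by fun_prop))
  exact rePred_exists hgraph

theorem encard_setOf_cpx_lt_le (hV : ∀ x, ∃ p, x ∈ V p) :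
    {x : BStr | x.length = n ∧ cpx V x < m}.encard ≤
      (descriptions V n ∩ {p | p.length < m}).encard := by
  refine le_trans (Set.encard_le_encard ?_) (encard_setOf_exists_mem_le V _)
  rintro x ⟨hx, hxm⟩
  obtain ⟨p, hp, hxp⟩ := exists_length_eq_cpx (hV x)
  exact ⟨p, ⟨⟨x, hxp, hx⟩, hp.trans_lt hxm⟩, hxp⟩

end Descriptions

section FrequentLengths

variable {V : BStr →. BStr}

/-- The strings `0ⁿ` such that at least `N` programs in `P` describe a string of length `n`. -/
def frequentLengths (V : BStr →. BStr) (N : ℕ) (P : Set BStr) : Set BStr :=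
  {x | x = numStr x.length ∧ N ≤ (descriptions V x.length ∩ P).encard}

theorem numStr_mem_frequentLengths {N n : ℕ} {P : Set BStr} :
    numStr n ∈ frequentLengths V N P ↔ N ≤ (descriptions V n ∩ P).encard := by
  simp [frequentLengths, numStr]

theorem pairwiseDisjoint_descriptions {T : Set BStr} (hT : ∀ x ∈ T, x = numStr x.length)
    (P : Set BStr) :
    T.PairwiseDisjoint fun x => descriptions V x.length ∩ P := by
  intro x hx y hy hxy
  refine Set.disjoint_left.2 fun p hpx hpy => hxy ?_
  rw [hT x hx, hT y hy, eq_of_mem_descriptions hpx.1 hpy.1]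

theorem rePred_mem_frequentLengths {α : Type} [Primcodable α] (hV : Partrec V) {N : α → ℕ}
    (hN : Computable N) {P : α → Set BStr} (hP : REPred fun x : α × BStr => x.2 ∈ P x.1) :
    REPred fun x : α × BStr => x.2 ∈ frequentLengths V (N x.1) (P x.1) := by
  have hquery : Computable fun x : α × BStr => (N x.1, x.2.length, x.1) :=
    (hN.comp .fst).pair ((Primrec.list_length.to_comp.comp .snd).pair .fst)
  have hzero : REPred fun x : α × BStr => x.2 = numStr x.2.length :=
    rePred_eq (by fun_prop) (by fun_prop)
  have hdesc : REPred fun x : (ℕ × α) × BStr => x.2 ∈ descriptions V x.1.1 ∧ x.2 ∈ P x.1.2 :=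
    rePred_and
      (rePred_comp (rePred_mem_descriptions hV)
        (by fun_prop : Computable fun x : (ℕ × α) × BStr => (x.1.1, x.2)) :)
      (rePred_comp hP (by fun_prop : Computable fun x : (ℕ × α) × BStr => (x.1.2, x.2)) :)
  have hmany : REPred fun x : ℕ × ℕ × α =>
      (x.1 : ℕ∞) ≤ (descriptions V x.2.1 ∩ P x.2.2).encard :=
    rePred_le_encard (S := fun x : ℕ × α => descriptions V x.1 ∩ P x.2) hdesc
  exact rePred_and hzero (rePred_comp hmany hquery :)

theorem natCast_mul_encard_frequentLengths_le (N : ℕ) (P : Set BStr) :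
    N * (frequentLengths V N P).encard ≤ P.encard :=
  (natCast_mul_encard_le_encard_biUnion (pairwiseDisjoint_descriptions (fun _ => And.left) P)
    fun _ => And.right).trans <|
      Set.encard_le_encard <| Set.iUnion₂_subset fun _ _ => Set.inter_subset_right

theorem _root_.UniversalPlain.exists_cpx_le_of_encard_le {U : BStr →. BStr}
    (hU : UniversalPlain U) {S : ℕ × ℕ → Set BStr}
    (hS : REPred fun x : (ℕ × ℕ) × BStr => x.2 ∈ S x.1) :
    ∃ c, ∀ s e, (S (s, e)).encard ≤ 2 ^ e → ∀ x ∈ S (s, e), cpx U x ≤ s + e + c := by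
  obtain ⟨R, hR, hlen, hRS⟩ := exists_isPrefixMachine_index hS
  have hindex : Computable fun x : ((BStr × BStr) × ℕ) × BStr =>
      ((x.2.length, x.1.2, x.2.length), x.2, x.1.1.2) :=
    Primrec.to_comp (by fun_prop)
  have hgraph : REPred fun x : ((BStr × BStr) × ℕ) × BStr =>
      x.1.1.1 = unaryCode x.1.2 ++ x.2 ∧ R (x.2.length, x.1.2, x.2.length) x.2 x.1.1.2 :=
    rePred_and (rePred_eq (by fun_prop) (by fun_prop)) (rePred_comp hR.rePred hindex :)
  obtain ⟨c, hc⟩ := hU.exists_simulation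
    (R := fun p x => ∃ s w, p = unaryCode s ++ w ∧ R (w.length, s, w.length) w x)
    (rePred_exists (rePred_exists hgraph)) (by
      rintro _ x y ⟨s, v, rfl, hx⟩ ⟨t, w, h, hy⟩
      obtain rfl := eq_of_unaryCode_append_eq h
      obtain rfl := List.append_cancel_left h
      exact (hR.eq_of_isPrefix hx hy List.prefix_rfl).2)
  refine ⟨c + 1, fun s e he x hx => ?_⟩
  obtain ⟨w, hw⟩ := hRS e (s, e) he x hx
  obtain rfl : w.length = e := hlen hw
  obtain ⟨q, hq, hqx⟩ := hc (unaryCode s ++ w) x ⟨s, w, rfl, hw⟩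
  have := cpx_le_length hqx
  simp only [List.length_append, length_unaryCode] at hq
  lia

theorem _root_.UniversalPlain.exists_cpxN_add_le {U : BStr →. BStr} (hU : UniversalPlain U) :
    ∃ c, ∀ n s L, 2 ^ (3 * s) ≤ (descriptions U n ∩ {p | p.length < L}).encard →
      cpxN U n + 2 * s ≤ L + c := by
  let S (a : ℕ × ℕ) : Set BStr :=
    frequentLengths U (2 ^ (3 * a.1)) {p | p.length < a.2 + 3 * a.1}
  have hS : REPred fun x : (ℕ × ℕ) × BStr => x.2 ∈ S x.1 := by
    have hshort : PrimrecPred fun x : (ℕ × ℕ) × BStr => x.2.length < x.1.2 + 3 * x.1.1 :=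
      Primrec.nat_lt.comp (by fun_prop) (by fun_prop)
    exact rePred_mem_frequentLengths (N := fun a : ℕ × ℕ => 2 ^ (3 * a.1))
      (P := fun a => {p | p.length < a.2 + 3 * a.1}) hU.1 (by fun_prop)
      hshort.computablePred.to_re
  have hcard (s e : ℕ) : (S (s, e)).encard ≤ 2 ^ e := by
    have h : (2 ^ (3 * s) : ℕ) * (S (s, e)).encard ≤ (2 ^ (3 * s) : ℕ) * 2 ^ e :=
      calc _ ≤ {p : BStr | p.length < e + 3 * s}.encard := natCast_mul_encard_frequentLengths_le _ _
        _ ≤ 2 ^ (e + 3 * s) := encard_length_lt_le _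
        _ = (2 ^ (3 * s) : ℕ) * 2 ^ e := by rw [pow_add, mul_comm]; norm_cast
    exact (ENat.mul_le_mul_left_iff (by simp) (by simp)).1 h
  obtain ⟨c, hc⟩ := hU.exists_cpx_le_of_encard_le hS
  refine ⟨c, fun n s L h => ?_⟩
  have hL : 3 * s ≤ L := by
    have := h.trans ((Set.encard_le_encard Set.inter_subset_right).trans (encard_length_lt_le L))
    exact (Nat.pow_le_pow_iff_right one_lt_two).1 (by exact_mod_cast this)
  obtain ⟨e, rfl⟩ := Nat.exists_eq_add_of_le' hL
  have hn : cpxN U n ≤ s + e + c :=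
    hc s e (hcard s e) _ (numStr_mem_frequentLengths.2 (by exact_mod_cast h))
  lia

theorem tsum_two_inv_pow_frequentLengths_le_one
    (hV : IsAntichain (· <+: ·) {p | (V p).Dom}) (m : ℕ) :
    ∑' r : {r : BStr × ℕ | r.1 ∈ frequentLengths V (2 ^ m) {p | p.length = r.2 + m}},
      (2⁻¹ : ENNReal) ^ r.1.2 ≤ 1 := by
  set T := {r : BStr × ℕ | r.1 ∈ frequentLengths V (2 ^ m) {p | p.length = r.2 + m}}
  let D (r : BStr × ℕ) : Set BStr := descriptions V r.1.length ∩ {p | p.length = r.2 + m}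
  have hD : T.PairwiseDisjoint D := by
    intro r hr r' hr' hne
    refine Set.disjoint_left.2 fun p hp hp' => hne (Prod.ext ?_ ?_)
    · rw [hr.1, hr'.1, eq_of_mem_descriptions hp.1 hp'.1]
    · have := hp.2.symm.trans hp'.2
      lia
  have hanti : IsAntichain (· <+: ·) (⋃ r ∈ T, D r) :=
    hV.subset <| Set.iUnion₂_subset fun r _ p hp =>
      Part.dom_iff_mem.2 (hp.1.imp fun _ => And.left)
  calc ∑' r : T, (2⁻¹ : ENNReal) ^ r.1.2
      = ∑' r : T, (2 ^ m : ℕ) * (2⁻¹ : ENNReal) ^ (r.1.2 + m) := by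
        congr! 2 with r
        rw [pow_add, mul_left_comm, Nat.cast_pow, Nat.cast_ofNat, ← mul_pow,
          ENNReal.mul_inv_cancel two_ne_zero ENNReal.ofNat_ne_top, one_pow, mul_one]
    _ ≤ ∑' p : ⋃ r ∈ T, D r, (2⁻¹ : ENNReal) ^ p.1.length :=
        tsum_natCast_mul_le_tsum_biUnion hD (fun r hr => hr.2)
          (w := fun r => 2⁻¹ ^ (r.2 + m)) (v := fun p => 2⁻¹ ^ p.length)
          fun r _ p hp => by rw [hp.2]
    _ ≤ 1 := tsum_two_inv_pow_length_le_one hanti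

theorem _root_.UniversalPrefixFree.exists_cpxN_add_le {U : BStr →. BStr}
    (hU : UniversalPrefixFree U) :
    ∃ c, ∀ n s l, 2 ^ (2 * s) ≤ (descriptions U n ∩ {p | p.length = l}).encard →
      cpxN U n + s ≤ l + c := by
  let S (t : ℕ) : Set (BStr × ℕ) :=
    {r | r.1 ∈ frequentLengths U (2 ^ (2 * t)) {p | p.length = r.2 + 2 * t}}
  have hS : REPred fun x : ℕ × BStr × ℕ => x.2 ∈ S x.1 := by
    have h := rePred_mem_frequentLengths (N := fun x : ℕ × ℕ => 2 ^ (2 * x.1))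
      (P := fun x => {p | p.length = x.2 + 2 * x.1}) hU.1 (by fun_prop)
      (rePred_eq (by fun_prop) (by fun_prop))
    exact rePred_comp h (by fun_prop : Computable fun x : ℕ × BStr × ℕ => ((x.1, x.2.2), x.2.1))
  have hsum (t : ℕ) : ∑' r : S t, (2⁻¹ : ENNReal) ^ r.1.2 ≤ 1 :=
    tsum_two_inv_pow_frequentLengths_le_one hU.isAntichain_dom (2 * t)
  obtain ⟨R, hR, hRS⟩ := exists_isPrefixMachine_of_tsum_le_one hS hsum
  obtain ⟨c, hc⟩ := hU.exists_simulation (isPrefixMachine_unaryCode.andThen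
    (hR.comp (f := fun x : Unit × ℕ => x.2) (by fun_prop)))
  refine ⟨c + 2, fun n s l h => ?_⟩
  have hl : 2 * s ≤ l := by
    have := h.trans ((Set.encard_le_encard Set.inter_subset_right).trans (encard_length_eq l).le)
    exact (Nat.pow_le_pow_iff_right one_lt_two).1 (by exact_mod_cast this)
  obtain ⟨j, rfl⟩ := Nat.exists_eq_add_of_le' hl
  obtain ⟨w, hw, hwn⟩ := hRS s (numStr n) j
    (numStr_mem_frequentLengths.2 (by exact_mod_cast h))
  obtain ⟨q, hq, hqn⟩ := hc (unaryCode s ++ w) (numStr n) ⟨_, w, s, rfl, rfl, hwn⟩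
  have hqn' : cpxN U n ≤ q.length := cpx_le_length hqn
  simp only [List.length_append, length_unaryCode] at hq
  lia

end FrequentLengths

section ComplexityCounting

variable {U : BStr →. BStr}

theorem _root_.UniversalPlain.exists_encard_cpx_lt_le (hU : UniversalPlain U) :
    ∃ c, ∀ n f,
      {x : BStr | x.length = n ∧ cpx U x < cpxN U n + 2 * f}.encard ≤ 2 ^ (3 * (f + c)) := by
  obtain ⟨c, hc⟩ := hU.exists_cpxN_add_le
  refine ⟨c + 1, fun n f => (encard_setOf_cpx_lt_le hU.exists_mem).trans (not_lt.1 fun h => ?_)⟩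
  have := hc n _ _ h.le
  lia

theorem _root_.UniversalPrefixFree.exists_encard_cpx_lt_le (hU : UniversalPrefixFree U)
    (hlen : ∀ x : BStr, cpxN U x.length ≤ cpx U x) (d : ℕ) :
    ∃ l, ∀ n, {x : BStr | x.length = n ∧ cpx U x < cpxN U n + d}.encard ≤ 2 ^ l := by
  obtain ⟨c, hc⟩ := hU.exists_cpxN_add_le
  refine ⟨d + 2 * (d + c), fun n => ?_⟩
  let D (i : ℕ) : Set BStr := descriptions U n ∩ {p | p.length = cpxN U n + i}
  have hD : ∀ i ∈ Finset.range d, (D i).encard ≤ 2 ^ (2 * (d + c)) := fun i hi =>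
    not_lt.1 fun h => by
      have := hc n _ _ h.le
      have := Finset.mem_range.1 hi
      lia
  have hcover : descriptions U n ∩ {p | p.length < cpxN U n + d} ⊆ ⋃ i ∈ Finset.range d, D i := by
    rintro p ⟨⟨x, hx, rfl⟩, hp : p.length < _⟩
    obtain ⟨i, hi⟩ := Nat.exists_eq_add_of_le ((hlen x).trans (cpx_le_length hx))
    have hid : i < d := by lia
    exact Set.mem_biUnion (Finset.mem_coe.2 (Finset.mem_range.2 hid)) ⟨⟨x, hx, rfl⟩, hi⟩
  calc {x : BStr | x.length = n ∧ cpx U x < cpxN U n + d}.encard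
      ≤ (⋃ i ∈ Finset.range d, D i).encard :=
        (encard_setOf_cpx_lt_le hU.exists_mem).trans (Set.encard_le_encard hcover)
    _ ≤ ∑ i ∈ Finset.range d, (D i).encard := Finset.set_encard_biUnion_le _ _
    _ ≤ d * 2 ^ (2 * (d + c)) := by simpa using Finset.sum_le_sum hD
    _ ≤ 2 ^ d * 2 ^ (2 * (d + c)) := by
        gcongr
        exact_mod_cast d.lt_two_pow_self.le
    _ = 2 ^ (d + 2 * (d + c)) := (pow_add _ _ _).symm

end ComplexityCounting

section Padding

theorem rePred_cpx_lt {V : BStr →. BStr} (hV : Partrec V) (hsurj : ∀ x, ∃ p, x ∈ V p) :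
    REPred fun x : ℕ × BStr => cpx V x.2 < x.1 := by
  have hgraph : REPred fun x : (ℕ × BStr) × BStr => x.1.2 ∈ V x.2 ∧ x.2.length < x.1.1 :=
    rePred_and (rePred_comp (rePred_mem hV)
        (by fun_prop : Computable fun x : (ℕ × BStr) × BStr => (x.2, x.1.2)) :)
      (Primrec.nat_lt.comp (by fun_prop) (by fun_prop)).computablePred.to_re
  refine (rePred_exists hgraph).of_eq fun x => ⟨?_, fun h => ?_⟩
  · rintro ⟨p, hp, hlt⟩
    exact (cpx_le_length hp).trans_lt hlt
  · obtain ⟨p, hp, hpx⟩ := exists_length_eq_cpx (hsurj x.2)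
    exact ⟨p, hpx, hp.trans_lt h⟩

/-- The string `z10…0` of length `n`, which determines `z`. It only has this length if
`z.length < n`. -/
def padStr (z : BStr) (n : ℕ) : BStr := z ++ true :: numStr (n - (z.length + 1))

theorem length_padStr {z : BStr} {n : ℕ} (h : z.length < n) : (padStr z n).length = n := by
  simp only [padStr, numStr, List.length_append, List.length_cons, List.length_replicate]
  lia

theorem eq_of_padStr_eq {v w : BStr} {n : ℕ} (h : padStr v n = padStr w n) : v = w := by
  have strip : ∀ u, (padStr u n).reverse.dropWhile (!·) = true :: u.reverse := by
    simp [padStr, numStr]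
  simpa [strip] using congrArg (fun u : BStr => u.reverse.dropWhile (!·)) h

theorem primrec_padStr : Primrec fun x : BStr × ℕ => padStr x.1 x.2 := by
  unfold padStr
  have hsub : Primrec fun x : BStr × ℕ => x.2 - (x.1.length + 1) :=
    Primrec.nat_sub.comp (by fun_prop) (by fun_prop)
  fun_prop

theorem _root_.UniversalPlain.exists_cpx_padStr_le {U : BStr →. BStr} (hU : UniversalPlain U) :
    ∃ c, ∀ n, cpx U (padStr (numStr (cpxN U n)) n) ≤ cpxN U n + c := by
  have hpad : Computable₂ fun (p x : BStr) => padStr (numStr p.length) x.length :=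
    primrec_padStr.to_comp.comp (by fun_prop : Computable fun x : BStr × BStr =>
      (numStr x.1.length, x.2.length))
  obtain ⟨c, hc⟩ := hU.2 _ (hU.1.map hpad)
  refine ⟨c, fun n => ?_⟩
  obtain ⟨p, hp, hpn⟩ := exists_length_eq_cpx (hU.exists_mem (numStr n))
  obtain ⟨q, hq, hqx⟩ := hc p _ (Part.mem_map _ hpn)
  simpa only [hp, length_numStr, cpxN] using (cpx_le_length hqx).trans hq

theorem _root_.UniversalPlain.eventually_cpxN_lt {U : BStr →. BStr} (hU : UniversalPlain U) :
    ∀ᶠ n in atTop, cpxN U n < n := by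
  obtain ⟨c, hc⟩ := hU.2 _ (primrec_numStr.comp primrec_binVal).to_comp.partrec
  refine eventually_atTop.2 ⟨2 * c + 4, fun n hn => ?_⟩
  have hlog : n < 2 ^ (n - c - 1) := by
    have := (n - c - 2).lt_two_pow_self
    have : 2 ^ (n - c - 1) = 2 * 2 ^ (n - c - 2) := by rw [← pow_succ']; congr 1; lia
    lia
  obtain ⟨w, hw, hwn⟩ := exists_length_eq_binVal_eq hlog
  obtain ⟨q, hq, hqn⟩ := hc w (numStr n) (by simp [hwn])
  have : cpxN U n ≤ q.length := cpx_le_length hqn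
  lia

theorem _root_.UniversalPrefixFreeCond.exists_cpxCond_le_of_encard_le {U : BStr → ℕ →. BStr}
    (hU : UniversalPrefixFreeCond U) {S : ℕ → Set BStr}
    (hS : REPred fun x : ℕ × BStr => x.2 ∈ S x.1) (l : ℕ) :
    ∃ c, ∀ y, (S y).encard ≤ 2 ^ l → ∀ x ∈ S y, cpxCond U x y ≤ c := by
  obtain ⟨R, hR, hlen, hRS⟩ := exists_isPrefixMachine_index hS
  obtain ⟨c, hc⟩ := hU.exists_simulation
    (hR.comp (by fun_prop : Computable fun y : ℕ => (l, y)))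
  refine ⟨l + c, fun y hy x hx => ?_⟩
  obtain ⟨p, hp⟩ := hRS l y hy x hx
  obtain ⟨q, hq, hqx⟩ := hc p y x hp
  rw [hlen hp] at hq
  exact (cpx_le_length (V := fun p => U p y) hqx).trans hq

theorem exists_cpxCond_le_of_cpx_padStr_lt {U : BStr →. BStr} (hU : UniversalPrefixFree U)
    (hlen : ∀ x : BStr, cpxN U x.length ≤ cpx U x) {V : BStr → ℕ →. BStr}
    (hV : UniversalPrefixFreeCond V) (d : ℕ) :
    ∃ c, ∀ n z, z.length < n → cpx U (padStr z n) < cpxN U n + d →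
      cpxCond V z (Nat.pair n (cpxN U n)) ≤ c := by
  let S (y : ℕ) : Set BStr :=
    {z | z.length < y.unpair.1 ∧ cpx U (padStr z y.unpair.1) < y.unpair.2 + d}
  have hS : REPred fun x : ℕ × BStr => x.2 ∈ S x.1 := by
    have hquery : Primrec fun x : ℕ × BStr => (x.1.unpair.2 + d, padStr x.2 x.1.unpair.1) :=
      .pair (by fun_prop) (primrec_padStr.comp
        (by fun_prop : Primrec fun x : ℕ × BStr => (x.2, x.1.unpair.1)))
    exact rePred_and (Primrec.nat_lt.comp (by fun_prop) (by fun_prop)).computablePred.to_re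
      (rePred_comp (rePred_cpx_lt hU.1 hU.exists_mem) hquery.to_comp :)
  obtain ⟨l, hl⟩ := hU.exists_encard_cpx_lt_le hlen d
  obtain ⟨c, hc⟩ := hV.exists_cpxCond_le_of_encard_le hS l
  refine ⟨c, fun n z hz hzd => hc _ ?_ z (by simpa [S] using ⟨hz, hzd⟩)⟩
  refine le_trans ?_ (hl n)
  exact Set.encard_le_encard_of_injOn (f := fun z => padStr z n)
    (fun z hz => ⟨length_padStr (by simpa using hz.1), by simpa using hz.2⟩)
    fun v _ w _ => eq_of_padStr_eq

end Padding

section Equivalence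

variable {U UK : BStr →. BStr} {UKc : BStr → ℕ →. BStr}

theorem numStr_injective : Function.Injective numStr := fun m n h => by
  simpa using congrArg List.length h

theorem _root_.UniversalPrefixFree.isPrefixMachine_pair_length (hU : UniversalPrefixFree U) :
    IsPrefixMachine fun (_ : Unit) p (y : ℕ) =>
      numStr y.unpair.1 ∈ U p ∧ p.length = y.unpair.2 where
  rePred := rePred_and
    (rePred_comp (rePred_mem hU.1) (by fun_prop : Computable fun x : Unit × BStr × ℕ =>
      (x.2.1, numStr x.2.2.unpair.1)) :)
    (rePred_eq (by fun_prop) (by fun_prop))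
  eq_of_isPrefix := by
    rintro _ p q y z ⟨hp, hpy⟩ ⟨hq, hqz⟩ hpq
    obtain rfl := hU.2.1 p q (Part.dom_iff_mem.2 ⟨_, hp⟩) (Part.dom_iff_mem.2 ⟨_, hq⟩) hpq
    have hyz := numStr_injective (Part.mem_unique hp hq)
    rw [← Nat.pair_unpair y, ← Nat.pair_unpair z, hyz, ← hpy, ← hqz]
    exact ⟨rfl, rfl⟩

theorem _root_.UniversalPrefixFreeCond.isPrefixMachine_numStr (hU : UniversalPrefixFreeCond UKc) :
    IsPrefixMachine fun (y : ℕ) p (m : ℕ) => numStr m ∈ UKc p y where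
  rePred := (rePred_comp (rePred_mem hU.1) (by fun_prop : Computable fun x : ℕ × BStr × ℕ =>
      ((x.2.1, x.1), numStr x.2.2)) :)
  eq_of_isPrefix := by
    rintro y p q m n hm hn hpq
    obtain rfl := hU.2.1 y p q (Part.dom_iff_mem.2 ⟨_, hm⟩) (Part.dom_iff_mem.2 ⟨_, hn⟩) hpq
    exact ⟨rfl, numStr_injective (Part.mem_unique hm hn)⟩

theorem exists_cpxCond_le (hU : UniversalPlain U) (hUK : UniversalPrefixFree UK)
    (hlenK : ∀ x : BStr, cpxN UK x.length ≤ cpx UK x) (hUKc : UniversalPrefixFreeCond UKc)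
    (h : ∀ c, ∃ d, ∀ x : BStr, cpx U x ≤ cpxN U x.length + c →
      cpx UK x ≤ cpxN UK x.length + d) :
    ∃ c, ∀ n, cpxCond UKc (numStr (cpxN U n)) (Nat.pair n (cpxN UK n)) ≤ c := by
  obtain ⟨c, hc⟩ := hU.exists_cpx_padStr_le
  obtain ⟨d, hd⟩ := h c
  obtain ⟨b, hb⟩ := exists_cpxCond_le_of_cpx_padStr_lt hUK hlenK hUKc (d + 1)
  have hbdd : IsBoundedUnder (· ≤ ·) atTop fun n =>
      cpxCond UKc (numStr (cpxN U n)) (Nat.pair n (cpxN UK n)) := by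
    refine ⟨b, eventually_map.2 (hU.eventually_cpxN_lt.mono fun n hn => ?_)⟩
    have hlength := length_padStr (z := numStr (cpxN U n)) (by rwa [length_numStr])
    have hpad := hd (padStr (numStr (cpxN U n)) n) (by rw [hlength]; exact hc n)
    rw [hlength] at hpad
    exact hb n _ (by rwa [length_numStr]) (Nat.lt_succ_of_le hpad)
  obtain ⟨B, hB⟩ := hbdd.bddAbove_range
  exact ⟨B, fun n => hB ⟨n, rfl⟩⟩

theorem exists_cpx_le_add_cpxCond (hU : UniversalPlain U) (hUK : UniversalPrefixFree UK)
    (hUKc : UniversalPrefixFreeCond UKc) :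
    ∃ c, ∀ (x : BStr) f, cpx U x < cpxN U x.length + 2 * f →
      cpx UK x ≤ cpxN UK x.length +
        cpxCond UKc (numStr (cpxN U x.length)) (Nat.pair x.length (cpxN UK x.length)) +
        4 * f + c := by
  let S (a : ℕ × ℕ) : Set BStr := {x | x.length = a.1 ∧ cpx U x < a.2}
  have hS : REPred fun x : (ℕ × ℕ) × BStr => x.2 ∈ S x.1 :=
    rePred_and (rePred_eq (by fun_prop) (by fun_prop)) (rePred_comp
      (rePred_cpx_lt hU.1 hU.exists_mem)
      (by fun_prop : Computable fun x : (ℕ × ℕ) × BStr => (x.1.2, x.2)) :)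
  obtain ⟨b, hb⟩ := hU.exists_encard_cpx_lt_le
  obtain ⟨R, hR, hlen, hRS⟩ := exists_isPrefixMachine_index hS
  have hindex : Computable fun x : ((Unit × ℕ) × ℕ) × ℕ =>
      (3 * (x.2 + b), x.1.1.2.unpair.1, x.1.2 + 2 * x.2) := Primrec.to_comp (by fun_prop)
  obtain ⟨c, hc⟩ := hUK.exists_simulation <| hUK.isPrefixMachine_pair_length.andThen <|
    (hUKc.isPrefixMachine_numStr.comp .snd).andThen <|
      isPrefixMachine_unaryCode.andThen <| hR.comp hindex
  refine ⟨1 + 3 * b + c, fun x f hx => ?_⟩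
  obtain ⟨p, hp, hpn⟩ := exists_length_eq_cpx (hUK.exists_mem (numStr x.length))
  obtain ⟨q, hq, hqm⟩ := exists_length_eq_cpx
    (V := fun p => UKc p (Nat.pair x.length (cpxN UK x.length)))
    (hUKc.exists_mem (numStr (cpxN U x.length)) _)
  obtain ⟨w, hw⟩ := hRS _ (x.length, cpxN U x.length + 2 * f) (hb x.length f) x ⟨rfl, hx⟩
  obtain ⟨r, hr, hrx⟩ := hc (p ++ (q ++ (unaryCode f ++ w))) x
    ⟨p, _, Nat.pair x.length (cpxN UK x.length), rfl, by simpa using ⟨hpn, hp⟩,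
      q, _, cpxN U x.length, rfl, hqm, _, w, f, rfl, rfl, by simpa using hw⟩
  have := cpx_le_length hrx
  simp only [List.length_append, length_unaryCode, hlen hw] at hr
  change p.length = cpxN UK x.length at hp
  change q.length = cpxCond UKc _ _ at hq
  lia

end Equivalence

end KolmogorovComplexity

/-- the following are equivalent:
(a) `∃ c ∀ n ∀ x, |x| = n → K(x) - K(n) ≤ 2(C(x) - C(n)) + c`;
(b) `∀ c' ∃ d' ∀ n ∀ x, |x| = n → (C(x) - C(n) ≤ c' → K(x) - K(n) ≤ d')`;
(c) `∃ c'' ∀ n, K(C(n) ∣ n, K(n)) ≤ c''`. -/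
theorem CK_conditions_equivalent
    (U UK : BStr →. BStr) (hU : UniversalPlain U) (hUK : UniversalPrefixFree UK)
    (hlenC : ∀ x : BStr, cpxN U x.length ≤ cpx U x)
    (hlenK : ∀ x : BStr, cpxN UK x.length ≤ cpx UK x)
    (UKc : BStr → ℕ →. BStr) (hUKc : UniversalPrefixFreeCond UKc) :
    ((∃ c : ℤ, ∀ (n : ℕ) (x : BStr), x.length = n →
        (cpx UK x : ℤ) - (cpxN UK n : ℤ) ≤ 2 * ((cpx U x : ℤ) - (cpxN U n : ℤ)) + c) ↔
      (∀ c' : ℤ, ∃ d' : ℤ, ∀ (n : ℕ) (x : BStr), x.length = n →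
        (cpx U x : ℤ) - (cpxN U n : ℤ) ≤ c' → (cpx UK x : ℤ) - (cpxN UK n : ℤ) ≤ d')) ∧
    ((∀ c' : ℤ, ∃ d' : ℤ, ∀ (n : ℕ) (x : BStr), x.length = n →
        (cpx U x : ℤ) - (cpxN U n : ℤ) ≤ c' → (cpx UK x : ℤ) - (cpxN UK n : ℤ) ≤ d') ↔
      (∃ c'' : ℕ, ∀ n : ℕ,
        cpxCond UKc (numStr (cpxN U n)) (Nat.pair n (cpxN UK n)) ≤ c'')) := by
  have cycle {P Q R : Prop} (hPQ : P → Q) (hQR : Q → R) (hRP : R → P) : (P ↔ Q) ∧ (Q ↔ R) :=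
    ⟨⟨hPQ, hRP ∘ hQR⟩, hQR, hPQ ∘ hRP⟩
  refine cycle ?a_imp_b ?b_imp_c ?c_imp_a
  case a_imp_b =>
    rintro ⟨c, hc⟩ c'
    exact ⟨2 * c' + c, fun n x hx hxc => by linarith [hc n x hx]⟩
  case b_imp_c =>
    refine fun hb => KolmogorovComplexity.exists_cpxCond_le hU hUK hlenK hUKc fun c => ?_
    obtain ⟨d, hd⟩ := hb c
    refine ⟨d.toNat, fun x hx => ?_⟩
    have := hd _ x rfl (by lia)
    lia
  case c_imp_a =>
    rintro ⟨c'', hc''⟩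
    obtain ⟨c, hc⟩ := KolmogorovComplexity.exists_cpx_le_add_cpxCond hU hUK hUKc
    refine ⟨c'' + c + 4, ?_⟩
    rintro _ x rfl
    have := hlenC x
    have := hc'' x.length
    have := hc x ((cpx U x - cpxN U x.length) / 2 + 1) (by lia)
    lia
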